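/- Let (α, 𝔄) be a measurable space. Then the bag-union map, which sends a pair (D, E) of finite multisets over α to their multiset sum D + E (in which the multiplicity of each element is the sum of its multiplicities in D and in E), is measurable with respect to the product σ-algebra 𝔠 ⊗ 𝔠 of the counting σ-algebra on the domain and the counting σ-algebra 𝔠 on the codomain. -/

import Mathlib

open MeasureTheory

/- `bagCount F D` is `|D|_F`: the number of elements of the finite bag (multiset) `D`
that lie in the set `F`, counted with multiplicity. -/
open Classical in
noncomputable def bagCount {α : Type*} (F : Set α) (D : Multiset α) : ℕ :=
  Multiset.countP (fun a => a ∈ F) D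

/-- The counting event `#(F, n)`: all finite bags `D` with `|D|_F = n`. -/
def countingEvent {α : Type*} (F : Set α) (n : ℕ) : Set (Multiset α) :=
  {D : Multiset α | bagCount F D = n}

/-- The counting σ-algebra `𝔠` on finite bags (multisets) over a measurable space `α`:
the σ-algebra generated by the counting events `#(F, n)` for measurable `F ⊆ α` and `n ∈ ℕ`. -/
def countingSigmaAlgebra (α : Type*) [MeasurableSpace α] : MeasurableSpace (Multiset α) :=
  MeasurableSpace.generateFrom
    {A : Set (Multiset α) | ∃ (F : Set α) (n : ℕ), MeasurableSet F ∧ A = countingEvent F n}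

theorem bagCount_add {α : Type*} (F : Set α) (D E : Multiset α) :
    bagCount F (D + E) = bagCount F D + bagCount F E := by
  classical exact Multiset.countP_add _ D E

section CountingSigmaAlgebra

variable {α β : Type*} [MeasurableSpace α] [MeasurableSpace β]

theorem measurableSet_countingEvent {F : Set α} (hF : MeasurableSet F) (n : ℕ) :
    MeasurableSet[countingSigmaAlgebra α] (countingEvent F n) :=
  MeasurableSpace.measurableSet_generateFrom ⟨F, n, hF, rfl⟩

theorem measurable_bagCount {F : Set α} (hF : MeasurableSet F) :
    Measurable[countingSigmaAlgebra α] (bagCount F) :=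
  @measurable_to_countable' _ _ _ _ (countingSigmaAlgebra α) _ (measurableSet_countingEvent hF)

theorem measurable_iff_measurable_bagCount {f : β → Multiset α} :
    Measurable[_, countingSigmaAlgebra α] f ↔
      ∀ F : Set α, MeasurableSet F → Measurable fun b => bagCount F (f b) := by
  refine ⟨fun hf F hF => (measurable_bagCount hF).comp hf, fun hcount => ?_⟩
  refine measurable_generateFrom ?_
  rintro _ ⟨F, n, hF, rfl⟩
  exact hcount F hF (measurableSet_singleton n)

end CountingSigmaAlgebra

/-- For a measurable space `α`, the bag-union map, sending a pair
`(D, E)` of finite bags over `α` to their multiset sum `D + E` (multiplicities add),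
is measurable w.r.t. the product of the counting σ-algebras on the domain and the
counting σ-algebra on the codomain. -/
theorem measurable_bag_union {α : Type*} [MeasurableSpace α] :
    @Measurable (Multiset α × Multiset α) (Multiset α)
      (@Prod.instMeasurableSpace _ _ (countingSigmaAlgebra α) (countingSigmaAlgebra α))
      (countingSigmaAlgebra α)
      (fun p : Multiset α × Multiset α => p.1 + p.2) := by
  let _ : MeasurableSpace (Multiset α) := countingSigmaAlgebra α
  refine measurable_iff_measurable_bagCount.mpr fun F hF => ?_
  simp only [bagCount_add]
  have hcount : Measurable (bagCount F) := measurable_bagCount hF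
  exact (hcount.comp measurable_fst).add (hcount.comp measurable_snd)
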